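/- arXiv:2306.07537 — 5 statements merged into one kernel-verified Lean document; each statement's English description precedes it below -/
import Mathlib

section
/- Let $\varkappa \in (0,1)$. The unit squircle function $\beta_{sc}$ is infinitely differentiable ($C^\infty$) on $\mathbb{R}^2 \setminus \{0\}$. -/
/-!
The square root is the only obstruction to smoothness, so it suffices that its radicand is positive
away from the origin. With `S = x² + y²`, the radicand equals `(1 - κ²) S² + κ² (x² - y²)²`,
which is at least `(1 - κ²) S² > 0` when `S > 0` and `0 < κ < 1`.
-/

noncomputable def squircle (κ : ℝ) (q : EuclideanSpace ℝ (Fin 2)) : ℝ :=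
  ((q 0) ^ 2 + (q 1) ^ 2 +
    Real.sqrt (((q 0) ^ 2 + (q 1) ^ 2) ^ 2 - 4 * κ ^ 2 * (q 0) ^ 2 * (q 1) ^ 2)) / 2 - 1

lemma squircle_radicand_pos {κ : ℝ} (hκ : κ ∈ Set.Ioo (0 : ℝ) 1)
    {q : EuclideanSpace ℝ (Fin 2)} (hq : q ≠ 0) :
    0 < ((q 0) ^ 2 + (q 1) ^ 2) ^ 2 - 4 * κ ^ 2 * (q 0) ^ 2 * (q 1) ^ 2 := by
  have hS : 0 < (q 0) ^ 2 + (q 1) ^ 2 := by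
    have h := pow_pos (norm_pos_iff.mpr hq) 2
    rwa [EuclideanSpace.real_norm_sq_eq, Fin.sum_univ_two] at h
  have hκ' : 0 < 1 - κ ^ 2 := by nlinarith [hκ.1, hκ.2]
  have key : ((q 0) ^ 2 + (q 1) ^ 2) ^ 2 - 4 * κ ^ 2 * (q 0) ^ 2 * (q 1) ^ 2 =
      (1 - κ ^ 2) * ((q 0) ^ 2 + (q 1) ^ 2) ^ 2 + κ ^ 2 * ((q 0) ^ 2 - (q 1) ^ 2) ^ 2 := by
    ring
  rw [key]
  positivity

theorem squircle_smooth (κ : ℝ) (hκ : κ ∈ Set.Ioo (0 : ℝ) 1) :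
    ContDiffOn ℝ (⊤ : ℕ∞) (squircle κ) {(0 : EuclideanSpace ℝ (Fin 2))}ᶜ := by
  have hcoord (i : Fin 2) : ContDiff ℝ (⊤ : ℕ∞) (fun q : EuclideanSpace ℝ (Fin 2) => q i) :=
    contDiff_euclidean.mp contDiff_id i
  have h0 := hcoord 0
  have h1 := hcoord 1
  have hrad : ContDiff ℝ (⊤ : ℕ∞) (fun q : EuclideanSpace ℝ (Fin 2) =>
      ((q 0) ^ 2 + (q 1) ^ 2) ^ 2 - 4 * κ ^ 2 * (q 0) ^ 2 * (q 1) ^ 2) := by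
    fun_prop
  have hsqrt := hrad.contDiffOn.sqrt
    fun q (hq : q ∈ ({0}ᶜ : Set (EuclideanSpace ℝ (Fin 2)))) => (squircle_radicand_pos hκ hq).ne'
  have hS : ContDiff ℝ (⊤ : ℕ∞)
      (fun q : EuclideanSpace ℝ (Fin 2) => (q 0) ^ 2 + (q 1) ^ 2) := by
    fun_prop
  exact ((hS.contDiffOn.add hsqrt).div_const 2).sub contDiffOn_const
end

section
/- Let $\varkappa \in (0,1)$ and $\rho > 0$. Define the ray-scaling map $T(q) = \rho\,\frac{1+\beta_{sc}(q)}{\|q\|}\,q$ for $q \in \mathbb{R}^2 \setminus \{0\}$ (note that $\beta_{sc}(q)=0$ implies $q \neq 0$, since $\beta_{sc}(0) = -1$). Then the restriction of $T$ to the squircle boundary $\{q \in \mathbb{R}^2 : \beta_{sc}(q) = 0\}$ is a bijection onto the circle $\{y \in \mathbb{R}^2 : \|y\| = \rho\}$. -/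
noncomputable def rayScaling (κ ρ : ℝ) (q : EuclideanSpace ℝ (Fin 2)) :
    EuclideanSpace ℝ (Fin 2) :=
  (ρ * (1 + squircle κ q) / ‖q‖) • q

theorem one_add_squircle_smul (κ t : ℝ) (q : EuclideanSpace ℝ (Fin 2)) :
    1 + squircle κ (t • q) = t ^ 2 * (1 + squircle κ q) := by
  simp only [squircle, PiLp.smul_apply, smul_eq_mul]
  have h : ((t * q 0) ^ 2 + (t * q 1) ^ 2) ^ 2 - 4 * κ ^ 2 * (t * q 0) ^ 2 * (t * q 1) ^ 2
      = (t ^ 2) ^ 2 * (((q 0) ^ 2 + (q 1) ^ 2) ^ 2 - 4 * κ ^ 2 * (q 0) ^ 2 * (q 1) ^ 2) := by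
    ring
  rw [h, Real.sqrt_mul (sq_nonneg _), Real.sqrt_sq (sq_nonneg t)]
  ring

/-- The square root is nonnegative, so `1 + squircle κ q ≥ ‖q‖ ^ 2 / 2`. -/
theorem one_add_squircle_pos (κ : ℝ) {q : EuclideanSpace ℝ (Fin 2)} (hq : q ≠ 0) :
    0 < 1 + squircle κ q := by
  have hn : 0 < ‖q‖ ^ 2 := pow_pos (norm_pos_iff.mpr hq) 2
  rw [EuclideanSpace.real_norm_sq_eq, Fin.sum_univ_two] at hn
  have hs := Real.sqrt_nonneg
    (((q 0) ^ 2 + (q 1) ^ 2) ^ 2 - 4 * κ ^ 2 * (q 0) ^ 2 * (q 1) ^ 2)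
  unfold squircle
  linarith

theorem norm_pos_of_squircle_eq_zero {κ : ℝ} {q : EuclideanSpace ℝ (Fin 2)}
    (hq : squircle κ q = 0) : 0 < ‖q‖ := by
  rw [norm_pos_iff]
  rintro rfl
  simp [squircle] at hq

theorem rayScaling_of_squircle_eq_zero {κ : ℝ} (ρ : ℝ) {q : EuclideanSpace ℝ (Fin 2)}
    (hq : squircle κ q = 0) : rayScaling κ ρ q = (ρ / ‖q‖) • q := by
  simp [rayScaling, hq]

theorem rayScaling_bijOn_boundary (κ : ℝ) (hκ : κ ∈ Set.Ioo (0 : ℝ) 1) (ρ : ℝ) (hρ : 0 < ρ) :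
    Set.BijOn (rayScaling κ ρ)
      {q : EuclideanSpace ℝ (Fin 2) | squircle κ q = 0}
      {y : EuclideanSpace ℝ (Fin 2) | ‖y‖ = ρ} := by
  refine ⟨fun q hq => ?_, fun p hp q hq h => ?_, fun y hy => ?_⟩
  · have hn := norm_pos_of_squircle_eq_zero hq
    rw [Set.mem_ofPred_eq, rayScaling_of_squircle_eq_zero ρ hq, norm_smul, Real.norm_eq_abs,
      abs_of_pos (div_pos hρ hn), div_mul_cancel₀ _ hn.ne']
  · have hnp := norm_pos_of_squircle_eq_zero hp
    have hnq := norm_pos_of_squircle_eq_zero hq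
    rw [rayScaling_of_squircle_eq_zero ρ hp, rayScaling_of_squircle_eq_zero ρ hq] at h
    have hpq : p = (‖p‖ / ‖q‖) • q := by
      have h' := congrArg (fun v => (‖p‖ / ρ) • v) h
      simp only [smul_smul] at h'
      rwa [show ‖p‖ / ρ * (ρ / ‖p‖) = 1 by field_simp, one_smul,
        show ‖p‖ / ρ * (ρ / ‖q‖) = ‖p‖ / ‖q‖ by field_simp] at h'
    -- Both points lie on the boundary, so homogeneity forces the ratio of the norms to be one.
    have hc := one_add_squircle_smul κ (‖p‖ / ‖q‖) q
    rw [← hpq, Set.mem_ofPred_eq.mp hp, Set.mem_ofPred_eq.mp hq, add_zero, mul_one] at hc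
    have h1 : ‖p‖ / ‖q‖ = 1 := (pow_eq_one_iff_of_nonneg
      (div_pos hnp hnq).le two_ne_zero).mp hc.symm
    rw [hpq, h1, one_smul]
  · have hny : ‖y‖ = ρ := hy
    have hy0 : y ≠ 0 := by
      rw [← norm_pos_iff, hny]
      exact hρ
    have hB := one_add_squircle_pos κ hy0
    have hs := Real.sqrt_pos.mpr hB
    have hz : squircle κ ((√(1 + squircle κ y))⁻¹ • y) = 0 := by
      have h := one_add_squircle_smul κ (√(1 + squircle κ y))⁻¹ y
      rw [inv_pow, Real.sq_sqrt hB.le, inv_mul_cancel₀ hB.ne'] at h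
      linarith
    refine ⟨_, hz, ?_⟩
    rw [rayScaling_of_squircle_eq_zero ρ hz, norm_smul, Real.norm_eq_abs,
      abs_of_pos (inv_pos.mpr hs), hny, smul_smul]
    rw [show ρ / ((√(1 + squircle κ y))⁻¹ * ρ) * (√(1 + squircle κ y))⁻¹ = 1 by field_simp,
      one_smul]
end

section
/- Let $a > 0$, $b > 0$, let $r \in \mathbb{R}^2$ with $r \neq 0$, let $(\lambda_k)_{k \geq 0}$ be a sequence of positive reals and $(\beta_k)_{k \geq 1}$ a sequence of positive reals. Define $\bar\beta^k = \prod_{j=1}^{k} \beta_j$ (with $\bar\beta^0 = 1$), the analytic switch $s^k = \frac{a\,\bar\beta^k}{a\,\bar\beta^k + \lambda_k\, b}$, the vector $F^k = s^k\, r$, and the scalar $\alpha^k = \frac{\lambda_{k+1}}{\lambda_k\, \beta_{k+1}}$. Then for every $k \geq 0$, the recursive update is valid: $\Psi(F^k,\, r,\, r,\, \alpha^k) = F^{k+1}$. -/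
/-!
Since `F` is a nonnegative multiple `s • r`, every norm in `Psi F r r α` is a multiple of `‖r‖`,
so the update acts on the switch alone, by `s ↦ s / (α * (1 - s) + s)`. This map
multiplies the odds ratio `(1 - s) / s` by `α`. The odds ratio
of the `k`-th switch is `lam k * b / (a * ∏ β)`, and `α` is exactly the quotient of consecutive
such ratios (`Psi_switch_smul`).
-/

/-- The auxiliary recursion function `Ψ(F, r, r̃, α) = ‖F‖ r̃ / (α(‖r‖ - ‖F‖) + ‖F‖)`. -/
noncomputable def Psi (F r rt : EuclideanSpace ℝ (Fin 2)) (α : ℝ) :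
    EuclideanSpace ℝ (Fin 2) :=
  (‖F‖ / (α * (‖r‖ - ‖F‖) + ‖F‖)) • rt

/-- The scaling identity for `Psi` with `P` in the role of `a * ∏ β`: for `F = s • r` with
`s = P / (P + l * b)` the factor `‖r‖` cancels, and the weight `l' / (l * β')` on `1 - s`
turns `s` into the switch with `P * β'` and `l'`. -/
theorem Psi_switch_smul {P b l l' β' : ℝ} (hP : 0 < P) (hb : 0 < b) (hl : 0 < l)
    (hl' : 0 < l') (hβ' : 0 < β') {r : EuclideanSpace ℝ (Fin 2)} (hr : r ≠ 0) :
    Psi ((P / (P + l * b)) • r) r r (l' / (l * β')) =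
      (P * β' / (P * β' + l' * b)) • r := by
  have hn : 0 < ‖r‖ := norm_pos_iff.mpr hr
  have hs : 0 < P / (P + l * b) := by positivity
  have hden : l' / (l * β') * (‖r‖ - P / (P + l * b) * ‖r‖) + P / (P + l * b) * ‖r‖ =
      ‖r‖ * (P * β' + l' * b) / (β' * (P + l * b)) := by
    field_simp
    ring
  unfold Psi
  rw [norm_smul, Real.norm_of_nonneg hs.le, hden]
  congr 1
  field_simp

theorem workspace_recursive_update
    (a b : ℝ) (ha : 0 < a) (hb : 0 < b)
    (r : EuclideanSpace ℝ (Fin 2)) (hr : r ≠ 0)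
    (lam : ℕ → ℝ) (hlam : ∀ k, 0 < lam k)
    (β : ℕ → ℝ) (hβ : ∀ k, 1 ≤ k → 0 < β k) :
    ∀ k : ℕ,
      Psi ((a * (∏ j ∈ Finset.range k, β (j + 1)) /
              (a * (∏ j ∈ Finset.range k, β (j + 1)) + lam k * b)) • r)
          r r (lam (k + 1) / (lam k * β (k + 1))) =
        (a * (∏ j ∈ Finset.range (k + 1), β (j + 1)) /
            (a * (∏ j ∈ Finset.range (k + 1), β (j + 1)) + lam (k + 1) * b)) • r := by
  intro k
  have hprod : 0 < ∏ j ∈ Finset.range k, β (j + 1) :=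
    Finset.prod_pos fun j _ => hβ (j + 1) (Nat.le_add_left 1 j)
  rw [Finset.prod_range_succ, ← mul_assoc]
  exact Psi_switch_smul (mul_pos ha hprod) hb (hlam k) (hlam (k + 1))
    (hβ (k + 1) (Nat.le_add_left 1 k)) hr
end

section
/- Let $a > 0$, $\lambda > 0$, $n \geq 1$, let $\beta_0, \dots, \beta_n$ be positive reals and $r_0, \dots, r_n \in \mathbb{R}^2$ nonzero vectors. Define the omitted products $\bar\beta_i = \prod_{j \neq i,\, 0 \leq j \leq n} \beta_j$, the analytic switches $s_i = \frac{a\,\bar\beta_i}{a\,\bar\beta_i + \lambda\, \beta_i}$, the vectors $F_i = s_i\, r_i$, and the scalars $\alpha_i = \beta_{i+1}^2 / \beta_i^2$. Then for every $0 \leq i < n$, the recursive update is valid: $\Psi(F_i,\, r_i,\, r_{i+1},\, \alpha_i) = F_{i+1}$. -/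
/-- The scalar form of the update: `b`, `c` are consecutive obstacle values, `P`, `Q` the
corresponding omitted products, and `N` the norm of the current vector. -/
lemma switch_update {a l b c P Q N : ℝ} (ha : 0 < a) (hl : 0 < l) (hb : 0 < b) (hc : 0 < c)
    (hQ : 0 < Q) (hN : 0 < N) (h : P * b = Q * c) :
    a * P / (a * P + l * b) * N /
        (c ^ 2 / b ^ 2 * (N - a * P / (a * P + l * b) * N) + a * P / (a * P + l * b) * N) =
      a * Q / (a * Q + l * c) := by
  obtain rfl : P = Q * c / b := by rw [eq_div_iff hb.ne', h]
  have hD : 0 < a * (Q * c / b) + l * b := by positivity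
  have hE : c ^ 2 / b ^ 2 * (N - a * (Q * c / b) / (a * (Q * c / b) + l * b) * N) +
      a * (Q * c / b) / (a * (Q * c / b) + l * b) * N =
      c * N * (a * Q + l * c) / (b * (a * (Q * c / b) + l * b)) := by
    generalize hd : a * (Q * c / b) + l * b = D at *
    have hd' : D * b = a * Q * c + l * b ^ 2 := by rw [← hd]; field_simp
    field_simp
    linear_combination c * hd'
  rw [hE]
  have : 0 < a * Q + l * c := by positivity
  generalize a * (Q * c / b) + l * b = D at *
  field_simp

theorem obstacle_recursive_update
    (a lam : ℝ) (ha : 0 < a) (hlam : 0 < lam)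
    (n : ℕ) (hn : 1 ≤ n)
    (β : ℕ → ℝ) (hβ : ∀ i ≤ n, 0 < β i)
    (r : ℕ → EuclideanSpace ℝ (Fin 2)) (hr : ∀ i ≤ n, r i ≠ 0) :
    ∀ i < n,
      Psi ((a * (∏ j ∈ (Finset.range (n + 1)).erase i, β j) /
              (a * (∏ j ∈ (Finset.range (n + 1)).erase i, β j) + lam * β i)) • r i)
          (r i) (r (i + 1)) ((β (i + 1)) ^ 2 / (β i) ^ 2) =
        (a * (∏ j ∈ (Finset.range (n + 1)).erase (i + 1), β j) /
            (a * (∏ j ∈ (Finset.range (n + 1)).erase (i + 1), β j) + lam * β (i + 1))) •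
          r (i + 1) := by
  intro i hi
  have hpos : ∀ k, 0 < ∏ j ∈ (Finset.range (n + 1)).erase k, β j := fun k =>
    Finset.prod_pos fun j hj =>
      hβ j (Nat.lt_succ_iff.mp (Finset.mem_range.mp (Finset.mem_of_mem_erase hj)))
  have hP := hpos i
  have hb := hβ i hi.le
  -- Both sides are the product of all the `β j`.
  have hPQ : (∏ j ∈ (Finset.range (n + 1)).erase i, β j) * β i =
      (∏ j ∈ (Finset.range (n + 1)).erase (i + 1), β j) * β (i + 1) := by
    rw [Finset.prod_erase_mul _ _ (Finset.mem_range.mpr (by omega)),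
      Finset.prod_erase_mul _ _ (Finset.mem_range.mpr (by omega))]
  unfold Psi
  rw [norm_smul, Real.norm_of_nonneg (by positivity),
    switch_update ha hlam hb (hβ (i + 1) hi) (hpos (i + 1)) (norm_pos_iff.mpr (hr i hi.le)) hPQ]
end

section
/- Let $a > 0$, let $(\xi_k)$, $(\beta_k)$, $(\beta^\star_k)$, $(\tilde\beta_k)$ be sequences of positive reals, let $(r_k)$ be a sequence of nonzero vectors in $\mathbb{R}^2$, and let $(\bar\beta_k)$ be a sequence of positive reals satisfying the relation $\bar\beta_{k+1} = \bar\beta_k\, \beta_k^2\, \beta^\star_k\, \tilde\beta_{k+1} \,/\, (\beta^\star_{k+1}\, \tilde\beta_k)$. Define the analytic switches $\sigma_k = \frac{a\,\bar\beta_k}{a\,\bar\beta_k + \xi_k\, \beta_k}$, the vectors $H_k = \sigma_k\, r_k$, and the scalars $\alpha_k = \frac{\xi_{k+1}}{\xi_k} \cdot \frac{\beta_{k+1}\, \tilde\beta_k\, \beta^\star_{k+1}}{\beta_k^3\, \tilde\beta_{k+1}\, \beta^\star_k}$. Then for every $k$, the recursive update of the purging transformation is valid: $\Psi(H_k,\,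 r_k,\, r_{k+1},\, \alpha_k) = H_{k+1} = \sigma_{k+1}\, r_{k+1}$. -/
theorem Psi_smul_self {σ : ℝ} (hσ : 0 < σ) {r : EuclideanSpace ℝ (Fin 2)} (hr : r ≠ 0)
    (rt : EuclideanSpace ℝ (Fin 2)) (α : ℝ) :
    Psi (σ • r) r rt α = (σ / (α * (1 - σ) + σ)) • rt := by
  have hn : ‖r‖ ≠ 0 := norm_ne_zero_iff.mpr hr
  have hden : α * (‖r‖ - σ * ‖r‖) + σ * ‖r‖ = (α * (1 - σ) + σ) * ‖r‖ := by ring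
  rw [Psi, norm_smul, Real.norm_of_nonneg hσ.le, hden, mul_div_mul_right _ _ hn]

/-- Multiplying the odds `B / A` against the switch `A / (A + B)` by `α` yields the switch
`A' / (A' + B')` as soon as `α * (B / A) = B' / A'`. -/
theorem switch_update_s12 {A B A' B' α : ℝ} (hA : 0 < A) (hB : 0 < B) (hA' : 0 < A')
    (hodds : α * (B / A) = B' / A') :
    A / (A + B) / (α * (1 - A / (A + B)) + A / (A + B)) = A' / (A' + B') := by
  have hAB : A + B ≠ 0 := (add_pos hA hB).ne'
  have hden : α * (1 - A / (A + B)) + A / (A + B) = (A / (A + B)) * (1 + α * (B / A)) := by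
    field_simp
    ring
  have hσ : A / (A + B) ≠ 0 := div_ne_zero hA.ne' hAB
  have hden' : A' + B' = A' * (1 + B' / A') := by field_simp
  rw [hden, hodds, hden', div_mul_cancel_left₀ hσ, div_mul_cancel_left₀ hA'.ne']

theorem purging_recursive_update
    (a : ℝ) (ha : 0 < a)
    (ξ β βstar tβ bβ : ℕ → ℝ)
    (hξ : ∀ k, 0 < ξ k) (hβ : ∀ k, 0 < β k) (hβstar : ∀ k, 0 < βstar k)
    (htβ : ∀ k, 0 < tβ k) (hbβ : ∀ k, 0 < bβ k)
    (hrel : ∀ k, bβ (k + 1) = bβ k * (β k) ^ 2 * βstar k * tβ (k + 1) /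
      (βstar (k + 1) * tβ k))
    (r : ℕ → EuclideanSpace ℝ (Fin 2)) (hr : ∀ k, r k ≠ 0) :
    ∀ k : ℕ,
      Psi ((a * bβ k / (a * bβ k + ξ k * β k)) • r k) (r k) (r (k + 1))
          ((ξ (k + 1) / ξ k) *
            ((β (k + 1) * tβ k * βstar (k + 1)) / ((β k) ^ 3 * tβ (k + 1) * βstar k))) =
        (a * bβ (k + 1) / (a * bβ (k + 1) + ξ (k + 1) * β (k + 1))) • r (k + 1) := by
  intro k
  have hA : 0 < a * bβ k := mul_pos ha (hbβ k)
  have hB : 0 < ξ k * β k := mul_pos (hξ k) (hβ k)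
  rw [Psi_smul_self (div_pos hA (add_pos hA hB)) (hr k),
    switch_update_s12 hA hB (mul_pos ha (hbβ (k + 1)))]
  have h1 := (hξ k).ne'
  have h2 := (hβ k).ne'
  have h3 := (hβstar k).ne'
  have h4 := (htβ k).ne'
  have h5 := (hbβ k).ne'
  have h6 := (hβstar (k + 1)).ne'
  have h7 := (htβ (k + 1)).ne'
  have h8 := ha.ne'
  rw [hrel k]
  field_simp
end
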